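/- Every positive integer not of the form 4^a(8b+7) with a,b ≥ 0 is a sum of three integer squares, and conversely no integer of the form 4^a(8b+7) is a sum of three squares (Legendre's three-square theorem). -/

import Mathlib

/-!
The integers `4 ^ a * (8 * b + 7)` are excluded by squares modulo `8` (for `a = 0`) and by descent:
a sum of three squares divisible by `4` has all three terms even (`not_sum`).

Conversely, following Dirichlet, after removing factors of `4` it suffices to treat `n` congruent
to `1, 2, 3, 5, 6` modulo `8`. Two facts are combined.

* Every positive definite ternary form with integral symmetric matrix of determinant `1` represents
  only sums of three squares (`ternary`). Writing `A` for the upper left `2 × 2` minor, integral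
  shears make the off-diagonal entries small compared with `a` and `A`; then either a swap of two
  variables decreases `a + A`, or `3 * a ^ 2 ≤ 4 * A` and `3 * A ^ 2 ≤ 4 * a`, which forces the
  identity matrix.
* If `-d` is a square modulo `d * n - 1` for some `d > 0`, then `n` is represented by such a form
  (`of_res`). Dirichlet's theorem on primes in arithmetic progressions gives a `d` for which
  `d * n - 1` is a prime (`n` even, `case_even`) or twice a prime (`n` odd, `case_odd`), and the
  residue condition then follows from quadratic reciprocity for the Jacobi symbol.
-/

/-- Every residue class modulo `a` has a representative of absolute value at most `a / 2`. -/
theorem shift (a t : ℤ) (ha : 0 < a) : ∃ k : ℤ, 4 * (t + k * a) ^ 2 ≤ a ^ 2 := by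
  refine ⟨-((2 * t + a) / (2 * a)), ?_⟩
  have h1 := Int.emod_nonneg (2 * t + a) (b := 2 * a) (by omega)
  have h2 := Int.emod_lt_of_pos (2 * t + a) (b := 2 * a) (by omega)
  have h3 := Int.mul_ediv_add_emod (2 * t + a) (2 * a)
  set k := (2 * t + a) / (2 * a)
  have h4 : 2 * (t + -k * a) ≤ a := by nlinarith
  have h5 : -a ≤ 2 * (t + -k * a) := by nlinarith
  nlinarith

/-- An integer represented by a positive definite ternary form with integral symmetric matrix
`!![a, t, s; t, b, r; s, r, c]` of determinant `1` is a sum of three squares. The natural number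
`m` bounds the reduction measure `a + (a * b - t ^ 2)`, on which the descent runs. -/
theorem ternary (n : ℤ) : ∀ (m : ℕ) (a b c r s t x y z : ℤ), 0 < a → 0 < a * b - t ^ 2 →
    a + (a * b - t ^ 2) ≤ m →
    a * b * c + 2 * r * s * t - a * r ^ 2 - b * s ^ 2 - c * t ^ 2 = 1 →
    a * x ^ 2 + b * y ^ 2 + c * z ^ 2 + 2 * r * y * z + 2 * s * x * z + 2 * t * x * y = n →
    ∃ x y z : ℤ, x ^ 2 + y ^ 2 + z ^ 2 = n := by
  intro m
  induction m with
  | zero => intros; push_cast at *; omega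
  | succ m ih =>
    have key : ∀ (a b c r s t x y z : ℤ), 0 < a → 0 < a * b - t ^ 2 →
        a + (a * b - t ^ 2) ≤ (m + 1 : ℕ) →
        a * b * c + 2 * r * s * t - a * r ^ 2 - b * s ^ 2 - c * t ^ 2 = 1 →
        a * x ^ 2 + b * y ^ 2 + c * z ^ 2 + 2 * r * y * z + 2 * s * x * z + 2 * t * x * y = n →
        4 * t ^ 2 ≤ a ^ 2 → 4 * s ^ 2 ≤ a ^ 2 →
        4 * (a * r - s * t) ^ 2 ≤ (a * b - t ^ 2) ^ 2 →
        ∃ x y z : ℤ, x ^ 2 + y ^ 2 + z ^ 2 = n := by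
      intro a b c r s t x y z ha hA hm hdet hn ht hs hB
      push_cast at hm
      have hb : 0 < b := by
        by_contra hb
        nlinarith [sq_nonneg t]
      have hAC : (a * b - t ^ 2) * (a * c - s ^ 2) = a + (a * r - s * t) ^ 2 := by
        linear_combination a * hdet
      have hC : 0 < a * c - s ^ 2 := by
        by_contra hC
        nlinarith [sq_nonneg (a * r - s * t)]
      -- Swapping `x` and `y` keeps `a * b - t ^ 2` and replaces `a` by `b`.
      by_cases hba : b < a
      · exact ih b a c s r t y x z hb (by linarith) (by linarith) (by linarith) (by linarith)
      -- Swapping `y` and `z` keeps `a` and replaces `a * b - t ^ 2` by `a * c - s ^ 2`.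
      by_cases hCA : a * c - s ^ 2 < a * b - t ^ 2
      · exact ih a c b r t s x z y ha hC (by linarith) (by linarith) (by linarith)
      push Not at hba hCA
      -- The form is now reduced in both senses, and these bounds leave only the identity matrix.
      have h1 : 3 * a ^ 2 ≤ 4 * (a * b - t ^ 2) := by nlinarith
      have h2 : 3 * (a * b - t ^ 2) ^ 2 ≤ 4 * a := by nlinarith
      generalize hAe : a * b - t ^ 2 = A at *
      have hA1 : A ≤ a := by
        by_contra h
        nlinarith
      have ha1 : a = 1 := by nlinarith
      subst ha1
      have hA2 : A = 1 := by omega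
      subst hA2
      have ht0 : t = 0 := by
        have : t ^ 2 = 0 := by have := sq_nonneg t; omega
        exact pow_eq_zero_iff (two_ne_zero) |>.1 this
      have hs0 : s = 0 := by
        have : s ^ 2 = 0 := by have := sq_nonneg s; omega
        exact pow_eq_zero_iff (two_ne_zero) |>.1 this
      subst ht0 hs0
      have hr0 : r = 0 := by
        have : r ^ 2 = 0 := by have := sq_nonneg r; ring_nf at hB; omega
        exact pow_eq_zero_iff (two_ne_zero) |>.1 this
      subst hr0
      have hb1 : b = 1 := by linarith
      subst hb1
      have hc1 : c = 1 := by linarith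
      subst hc1
      exact ⟨x, y, z, by linarith⟩
    intro a b c r s t x y z ha hA hm hdet hn
    obtain ⟨k, hk⟩ := shift (a * b - t ^ 2) (a * r - s * t) hA
    obtain ⟨l, hl⟩ := shift a t ha
    obtain ⟨j, hj⟩ := shift a (s + k * t) ha
    -- The form is evaluated after the unimodular substitution in which the original `y` is
    -- `y' + k z'` and the original `x` is `x' + l y' + j z'`.
    refine key a (b + 2 * l * t + l ^ 2 * a)
      (c + 2 * k * r + k ^ 2 * b + 2 * j * (s + k * t) + j ^ 2 * a)
      (r + k * b + j * t + l * (s + k * t) + l * j * a) (s + k * t + j * a) (t + l * a)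
      (x - l * (y - k * z) - j * z) (y - k * z) z ha ?_ ?_ ?_ ?_ hl hj ?_
    · linarith
    · linarith
    · linarith
    · linarith
    · convert hk using 2 <;> ring

/-- If `-d` is a square modulo `d * n - 1`, then `n` is a sum of three squares: with
`w ^ 2 + d = (d * n - 1) * e`, the matrix `!![e, w, 1; w, d * n - 1, 0; 1, 0, n]` is positive
definite of determinant `1`, and its form takes the value `n` at `(0, 0, 1)`. -/
theorem of_res (n d : ℤ) (m : ℤ) (hd : 0 < d) (hm : m = d * n - 1) (hm0 : 0 < m) (w : ℤ)
    (h : m ∣ w ^ 2 + d) : ∃ x y z : ℤ, x ^ 2 + y ^ 2 + z ^ 2 = n := by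
  obtain ⟨e, he⟩ := h
  have he0 : 0 < e := by
    by_contra h
    nlinarith [sq_nonneg w]
  exact ternary n (e + (e * m - w ^ 2)).toNat e m n 0 1 w 0 0 1 he0 (by linarith)
    (Int.self_le_toNat _) (by subst hm; linear_combination (-n) * he) (by ring)

/-- Dirichlet's theorem, with the prime written as an explicit term of the progression. -/
theorem exists_prime (a q : ℕ) (hq : q ≠ 0) (h : a.Coprime q) :
    ∃ p j : ℕ, p.Prime ∧ p = q * j + a := by
  obtain ⟨p, hp, hpr, hpe⟩ := Nat.forall_exists_prime_gt_and_modEq a hq h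
  obtain ⟨j, hj⟩ := (Nat.modEq_iff_dvd' hp.le).1 hpe.symm
  exact ⟨p, j, hpr, by omega⟩

theorem sq_of_jacobi (p d : ℕ) (hp : p.Prime) (h : jacobiSym (-d) p = 1) :
    ∃ w : ℤ, (p : ℤ) ∣ w ^ 2 + d := by
  have := Fact.mk hp
  obtain ⟨w, hw⟩ := ZMod.isSquare_of_jacobiSym_eq_one h
  refine ⟨w.val, ?_⟩
  rw [← ZMod.intCast_zmod_eq_zero_iff_dvd]
  push_cast at hw ⊢
  rw [ZMod.natCast_zmod_val]
  linear_combination -hw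

/-- For `n ≡ 2 (mod 4)` take a prime `p = d * n - 1` with `d = 4 * j + 1`. Then `p ≡ 1 (mod 4)`,
and reciprocity gives `(-d / p) = (d / p) = (p / d) = (-1 / d) = 1`. -/
theorem case_even (n : ℕ) (hn : n % 4 = 2) : ∃ x y z : ℤ, x ^ 2 + y ^ 2 + z ^ 2 = n := by
  obtain ⟨p, j, hp, hpj⟩ := exists_prime (n - 1) (4 * n) (by omega) (by
    apply Nat.Coprime.mul_right
    · refine Nat.Coprime.pow_right (k := _) (m := 2) 2 ?_
      apply (Nat.coprime_two_right).2
      rw [Nat.odd_iff]; omega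
    · nth_rw 2 [show n = n - 1 + 1 by omega]
      simp)
  have hpd : p + 1 = (4 * j + 1) * n := by
    rw [hpj, add_assoc, Nat.sub_add_cancel (by omega)]; ring
  have hp4 : p % 4 = 1 := by
    have : p = 4 * (n * j) + (n - 1) := by rw [hpj]; ring
    omega
  generalize hd : 4 * j + 1 = d at hpd
  have hd4 : d % 4 = 1 := by omega
  have hpz : (p : ℤ) + 1 = d * n := by exact_mod_cast hpd
  have hpodd : Odd p := by rw [Nat.odd_iff]; omega
  have hdodd : Odd d := by rw [Nat.odd_iff]; omega
  obtain ⟨w, hw⟩ := sq_of_jacobi p d hp (by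
    rw [jacobiSym.neg _ hpodd, ZMod.χ₄_nat_one_mod_four hp4, one_mul,
      jacobiSym.quadratic_reciprocity_one_mod_four' hdodd hp4,
      jacobiSym.mod_left, show (p : ℤ) = -1 + d * n by linarith, Int.add_mul_emod_self_left,
      ← jacobiSym.mod_left, jacobiSym.at_neg_one hdodd, ZMod.χ₄_nat_one_mod_four hd4])
  exact of_res n d p (by omega) (by linarith) (by have := hp.pos; omega) w hw

/-- For odd `n` take a prime `p` with `2 * p = d * n - 1` and `d = 8 * j + c`, where `c = 1` if
`n ≡ 3 (mod 8)` and `c = 3` if `n ≡ 1 (mod 4)`. Since `d ≡ 1, 3 (mod 8)`, reciprocity gives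
`(-d / p) = (p / d) = (-2 / d) (p / d) = (-2p / d) = (1 / d) = 1`. -/
theorem case_odd (n c : ℕ) (hc : c = 1 ∧ n % 8 = 3 ∨ c = 3 ∧ n % 4 = 1) :
    ∃ x y z : ℤ, x ^ 2 + y ^ 2 + z ^ 2 = n := by
  obtain ⟨a, ha⟩ : ∃ a, c * n = 2 * a + 1 := by
    refine ⟨(c * n - 1) / 2, ?_⟩
    rcases hc with ⟨rfl, h⟩ | ⟨rfl, h⟩ <;> omega
  have ha2 : a % 2 = 1 := by rcases hc with ⟨rfl, h⟩ | ⟨rfl, h⟩ <;> omega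
  have hn0 : 0 < n := by omega
  obtain ⟨p, j, hp, hpj⟩ := exists_prime a (4 * n) (by omega) (by
    apply Nat.Coprime.mul_right
    · refine Nat.Coprime.pow_right (k := _) (m := 2) 2 ?_
      apply (Nat.coprime_two_right).2
      rw [Nat.odd_iff]; omega
    · rw [← Nat.isCoprime_iff_coprime]
      exact ⟨-2, c, by have : (c : ℤ) * n = 2 * a + 1 := by exact_mod_cast ha
                       linarith⟩)
  have hpd : 2 * p + 1 = (8 * j + c) * n := by
    rw [hpj]; linarith
  have hp4 : p % 4 = a % 4 := by
    have : p = 4 * (n * j) + a := by rw [hpj]; ring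
    omega
  generalize hd : 8 * j + c = d at hpd
  have hd8 : d % 8 = 1 ∨ d % 8 = 3 := by omega
  have hpz : 2 * (p : ℤ) + 1 = d * n := by exact_mod_cast hpd
  have hpodd : Odd p := by rw [Nat.odd_iff]; omega
  have hdodd : Odd d := by rw [Nat.odd_iff]; omega
  have hpd1 : jacobiSym p d = 1 := by
    have h2 : jacobiSym (-2) d = 1 := by
      rw [jacobiSym.at_neg_two hdodd, ZMod.χ₈'_nat_eq_if_mod_eight,
        if_neg (by omega), if_pos hd8]
    rw [← one_mul (jacobiSym p d), ← h2, ← jacobiSym.mul_left, jacobiSym.mod_left,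
      show (-2 : ℤ) * p = 1 + d * (-n) by linarith, Int.add_mul_emod_self_left,
      ← jacobiSym.mod_left, jacobiSym.one_left, h2]
  obtain ⟨w, hw⟩ := sq_of_jacobi p d hp (by
    rw [jacobiSym.neg _ hpodd, ← hpd1]
    rcases (by omega : p % 4 = 1 ∨ p % 4 = 3) with h | h
    · rw [ZMod.χ₄_nat_one_mod_four h, one_mul, jacobiSym.quadratic_reciprocity_one_mod_four' hdodd h]
    · have hd4 : d % 4 = 3 := by
        rcases hc with ⟨rfl, h⟩ | ⟨rfl, h⟩ <;> omega
      rw [ZMod.χ₄_nat_three_mod_four h, jacobiSym.quadratic_reciprocity_three_mod_four hd4 h,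
        neg_one_mul, neg_neg])
  -- Replacing `w` by `w + p` if necessary makes `w` odd, so that `2 * p` divides `w ^ 2 + d`.
  obtain ⟨v, hv, hvo⟩ : ∃ v : ℤ, (p : ℤ) ∣ v ^ 2 + d ∧ Odd v := by
    rcases Int.even_or_odd w with h | h
    · refine ⟨w + p, ?_, h.add_odd (by exact_mod_cast hpodd)⟩
      rw [show (w + p) ^ 2 + (d : ℤ) = (w ^ 2 + d) + p * (2 * w + p) by ring]
      exact dvd_add hw (dvd_mul_right _ _)
    · exact ⟨w, hw, h⟩
  refine of_res n d (2 * p) (by omega) (by linarith) (by have := hp.pos; omega) v ?_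
  refine IsCoprime.mul_dvd ?_ ?_ hv
  · exact_mod_cast (Nat.isCoprime_iff_coprime.2 ((Nat.coprime_two_left).2 hpodd))
  · exact even_iff_two_dvd.1 (hvo.pow.add_odd (by exact_mod_cast hdodd))

theorem even_of_four_dvd (x y z : ℤ) (h : 4 ∣ x ^ 2 + y ^ 2 + z ^ 2) :
    2 ∣ x ∧ 2 ∣ y ∧ 2 ∣ z := by
  have key : ∀ x : ℤ, x ^ 2 % 4 = 0 ∧ 2 ∣ x ∨ x ^ 2 % 4 = 1 := by
    intro x
    obtain ⟨k, rfl | rfl⟩ := Int.even_or_odd' x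
    · left; ring_nf; omega
    · right; ring_nf; omega
  have := key x
  have := key y
  have := key z
  omega

theorem not_sum (a b : ℕ) : ∀ x y z : ℤ,
    x ^ 2 + y ^ 2 + z ^ 2 ≠ 4 ^ a * (8 * (b : ℤ) + 7) := by
  induction a with
  | zero =>
    intro x y z h
    have key : ∀ x : ℤ, x ^ 2 % 8 = 0 ∨ x ^ 2 % 8 = 1 ∨ x ^ 2 % 8 = 4 := by
      intro x
      have : x % 8 = 0 ∨ x % 8 = 1 ∨ x % 8 = 2 ∨ x % 8 = 3 ∨ x % 8 = 4 ∨ x % 8 = 5 ∨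
        x % 8 = 6 ∨ x % 8 = 7 := by omega
      rcases this with h | h | h | h | h | h | h | h <;> simp [pow_two, Int.mul_emod, h]
    have := key x
    have := key y
    have := key z
    omega
  | succ a ih =>
    intro x y z h
    obtain ⟨⟨x, rfl⟩, ⟨y, rfl⟩, ⟨z, rfl⟩⟩ := even_of_four_dvd x y z
      ⟨4 ^ a * (8 * (b : ℤ) + 7), by rw [h]; ring⟩
    exact ih x y z (by rw [pow_succ 4] at h; linarith)

theorem is_sum (N : ℕ) : 1 ≤ N → (¬ ∃ a b : ℕ, N = 4 ^ a * (8 * b + 7)) →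
    ∃ x y z : ℤ, x ^ 2 + y ^ 2 + z ^ 2 = (N : ℤ) := by
  induction N using Nat.strong_induction_on with
  | _ N ih =>
    intro hN h
    by_cases h4 : 4 ∣ N
    · obtain ⟨M, rfl⟩ := h4
      obtain ⟨x, y, z, hx⟩ := ih M (by omega) (by omega) (by
        rintro ⟨a, b, rfl⟩
        exact h ⟨a + 1, b, by ring⟩)
      exact ⟨2 * x, 2 * y, 2 * z, by push_cast; linarith⟩
    · have h7 : N % 8 ≠ 7 := fun h7 => h ⟨0, N / 8, by omega⟩
      rcases (by omega : N % 4 = 2 ∨ N % 8 = 3 ∨ N % 4 = 1) with h | h | h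
      · exact case_even N h
      · exact case_odd N 1 (Or.inl ⟨rfl, h⟩)
      · exact case_odd N 3 (Or.inr ⟨rfl, h⟩)

theorem stmt5 (N : ℕ) (hN : 1 ≤ N) :
    (∃ x y z : ℤ, x ^ 2 + y ^ 2 + z ^ 2 = (N : ℤ)) ↔
      ¬ ∃ a b : ℕ, N = 4 ^ a * (8 * b + 7) := by
  refine ⟨?_, is_sum N hN⟩
  rintro ⟨x, y, z, h⟩ ⟨a, b, rfl⟩
  exact not_sum a b x y z (by rw [h]; push_cast; rfl)
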